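/- Let p be a prime and G a group. Let A and B be ℤG-modules whose underlying additive groups are abelian p-groups of finite rank, and suppose that the underlying abelian group of B is divisible. Then for all n ≥ 0 there is an isomorphism of abelian groups Ext^n_{ℤG}(A,B) ≅ Ext^n_{ℤ_pG}(B*, A*), where ℤ_p denotes the ring of p-adic integers and B*, A* are the Pontryagin duals with the contragredient G-action. -/

import Mathlib

/-!
Statement 12: Lemma 2.9 of the paper (Pontryagin duality for Ext groups).
The quasicyclic group `ℤ(p^∞)` is realized as `ℚ_p/ℤ_p`, which carries its
natural module structure over the ring `ℤ_p` of `p`-adic integers; the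
Pontryagin dual of a `ℤG`-module `X` is `Hom_ℤ(X, ℤ(p^∞))` with the
contragredient `G`-action, a `ℤ_pG`-module.  `Ext` groups over `ℤG` and `ℤ_pG`
are the `Ext` groups of the abelian categories `Rep ℤ G` and `Rep ℤ_p G`.
-/

open CategoryTheory

noncomputable section




/-- The rational circle `ℚ/ℤ`. -/
abbrev RatCircle : Type := ℚ ⧸ AddSubgroup.zmultiples (1 : ℚ)

/-- The quasicyclic (Prüfer) `p`-group, realized as the `p`-primary part of `ℚ/ℤ`. -/
def pruferSubgroup (p : ℕ) : AddSubgroup RatCircle where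
  carrier := {x | ∃ n : ℕ, (p ^ n : ℕ) • x = 0}
  zero_mem' := ⟨0, smul_zero _⟩
  add_mem' := by
    rintro a b ⟨m, hm⟩ ⟨n, hn⟩
    refine ⟨m + n, ?_⟩
    have ha : (p ^ m * p ^ n) • a = 0 := by rw [mul_comm, mul_smul, hm, smul_zero]
    have hb : (p ^ m * p ^ n) • b = 0 := by rw [mul_smul, hn, smul_zero]
    rw [smul_add, pow_add, ha, hb, add_zero]
  neg_mem' := by
    rintro a ⟨m, hm⟩
    exact ⟨m, by rw [smul_neg, hm, neg_zero]⟩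

/-- A group has a quasicyclic `p`-section if some quotient of a subgroup is
isomorphic to the Prüfer `p`-group. -/
def HasQuasicyclicSection (G : Type*) [Group G] (p : ℕ) : Prop :=
  ∃ (H : Subgroup G) (K : Subgroup H) (_ : K.Normal),
    Nonempty ((H ⧸ K) ≃* Multiplicative (pruferSubgroup p))

/-- The spectrum of a group: the set of primes `p` such that the group has a
section isomorphic to the quasicyclic `p`-group. -/
def groupSpectrum (G : Type*) [Group G] : Set ℕ :=
  {p | p.Prime ∧ HasQuasicyclicSection G p}

/-- The spectrum of an (additive) abelian group, via `Multiplicative`. -/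
abbrev addSpectrum (A : Type*) [AddGroup A] : Set ℕ :=
  groupSpectrum (Multiplicative A)

/-- An abelian group has finite rank if its torsion-free rank and all of its
`p`-ranks are finite. -/
def FiniteRankAbelian (A : Type*) [AddCommGroup A] : Prop :=
  (∃ n : ℕ, ∀ k : ℕ, (∃ f : (Fin k →₀ ℤ) →+ A, Function.Injective f) → k ≤ n) ∧
  ∀ p : ℕ, p.Prime → {a : A | (p : ℕ) • a = 0}.Finite

/-- A group has finite rank (in the sense appropriate for abelian groups:
finite torsion-free rank and finite `p`-ranks). -/
def FiniteRankGroup (G : Type*) [Group G] : Prop :=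
  (∃ n : ℕ, ∀ k : ℕ,
    (∃ f : Multiplicative (Fin k →₀ ℤ) →* G, Function.Injective f) → k ≤ n) ∧
  ∀ p : ℕ, p.Prime → {g : G | g ^ p = 1}.Finite

/-- A solvable group of finite rank: a solvable group all of whose abelian
sections have finite rank. -/
def SolvableOfFiniteRank (G : Type*) [Group G] : Prop :=
  IsSolvable G ∧
    ∀ (H : Subgroup G) (K : Subgroup H) (_ : K.Normal),
      (∀ x y : H ⧸ K, x * y = y * x) → FiniteRankGroup (H ⧸ K)

/-- A group is virtually abelian. -/
def VirtuallyAbelian (G : Type*) [Group G] : Prop :=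
  ∃ H : Subgroup G, H.index ≠ 0 ∧ ∀ x y : H, x * y = y * x


variable (p : ℕ) [Fact p.Prime]

/-- The quasicyclic group `ℤ(p^∞)`, realized as `ℚ_p/ℤ_p`, a `ℤ_p`-module. -/
abbrev ZpQuasicyclic : Type := ℚ_[p] ⧸ (Submodule.span ℤ_[p] {(1 : ℚ_[p])})

/-- The Pontryagin dual `Hom_ℤ(X, ℤ(p^∞))` of an abelian group `X`, as a
`ℤ_p`-module. -/
abbrev PontryaginDual' (X : Type) [AddCommGroup X] : Type :=
  X →ₗ[ℤ] ZpQuasicyclic p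

variable {G : Type} [Group G]

/-- The contragredient representation on the Pontryagin dual of (the underlying
abelian group of) a representation, `(g • φ) x = φ (g⁻¹ • x)`. -/
def dualRep (A : Rep ℤ G) : Representation ℤ_[p] G (PontryaginDual' p (A : Type)) where
  toFun g :=
    { toFun := fun φ => φ ∘ₗ (A.ρ g⁻¹)
      map_add' := fun φ ψ => LinearMap.add_comp _ _ _
      map_smul' := fun z φ => LinearMap.smul_comp _ _ _ }
  map_one' := by
    ext φ x
    simp
  map_mul' g h := by
    ext φ x
    simp [mul_inv_rev]

/-- The Pontryagin dual of a `ℤG`-module, as an object of `Rep ℤ_p G`. -/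
def pontryaginDualRep (A : Rep ℤ G) : Rep ℤ_[p] G := Rep.of (dualRep p A)

/-!
Let `T = ℤ(p^∞)`. The functors `Hom_ℤ(-, T)` from `ℤG`-modules to `ℤ_pG`-modules and
`Hom_{ℤ_p}(-, T)` back are exact, since `T` is divisible, and adjoint on the right: both
`Hom(A, Hom_{ℤ_p}(X, T))` and `Hom(X, A*)` consist of the invariant pairings of `A` and `X` into
`T`. Hence `A ↦ A*` takes projective objects to injective ones, and dimension shifting extends the
adjunction to `Ext^n(A, Hom_{ℤ_p}(X, T)) ≅ Ext^n(X, A*)`. For `X = B*` it remains to see that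
evaluation is an isomorphism of `B` with `Hom_{ℤ_p}(B*, T)`. As the `p`-torsion of the `p`-group
`B` is finite, `B` embeds in a finite power of `T`, and biduality follows from `End(T) = ℤ_p`.
-/

universe w v u w₂ v₂ u₂

/-- Two quotients `B` of `A` and `B'` of `A'` are isomorphic as soon as an isomorphism `A ≃+ A'`
matches the kernels of the two projections. -/
def addEquivOfSurjective {A B A' B' : Type*} [AddCommGroup A] [AddCommGroup B] [AddCommGroup A']
    [AddCommGroup B'] (φ : A →+ B) (ψ : A' →+ B') (hφ : Function.Surjective φ)
    (hψ : Function.Surjective ψ) (e : A ≃+ A') (h : ∀ a, φ a = 0 ↔ ψ (e a) = 0) : B ≃+ B' :=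
  have hker : φ.ker = (ψ.comp e.toAddMonoidHom).ker := AddSubgroup.ext h
  (QuotientAddGroup.quotientKerEquivOfSurjective φ hφ).symm.trans <|
    (QuotientAddGroup.quotientAddEquivOfEq hker).trans <|
      QuotientAddGroup.quotientKerEquivOfSurjective (ψ.comp e.toAddMonoidHom)
        (hψ.comp e.surjective)

section ProjectiveResolution

variable {C : Type u} [Category.{v} C] [Abelian C] [HasExt.{w} C] {X Y : C}
  (P : ProjectiveResolution X)

open ProjectiveResolution CochainComplex.HomComplex

theorem extMk_zero_eq_zero_iff (f : P.complex.X 0 ⟶ Y) (hf : P.complex.d 1 0 ≫ f = 0) :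
    P.extMk f 1 rfl hf = 0 ↔ f = 0 := by
  refine ⟨fun h ↦ ?_, fun h ↦ by simp [h]⟩
  rw [← P.extEquivCohomologyClass.apply_eq_iff_eq, extEquivCohomologyClass_extMk,
    extEquivCohomologyClass_zero, CohomologyClass.mk_eq_zero_iff,
    Cocycle.toSingleMk_mem_coboundaries_iff _ _ _ _ _ 1 (by lia)] at h
  obtain ⟨g, hg⟩ := h
  have hg_zero : g = 0 :=
    (P.cochainComplex.isZero_of_isStrictlyLE 0 1 (by lia)).eq_of_src _ _
  rw [hg_zero, Limits.comp_zero] at hg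
  rw [← cancel_epi (P.cochainComplexXIso (-(0 : ℕ)) 0 rfl).hom]
  simpa using hg.symm

-- In degree `0` the index `prev 0` is `0` and the differential is zero.
theorem extMk_eq_zero_iff_exists_prev {n : ℕ} (f : P.complex.X n ⟶ Y)
    (hf : P.complex.d (n + 1) n ≫ f = 0) :
    P.extMk f (n + 1) rfl hf = 0 ↔
      ∃ g : P.complex.X ((ComplexShape.up ℕ).prev n) ⟶ Y, P.complex.d n _ ≫ g = f := by
  cases n with
  | zero =>
    rw [extMk_zero_eq_zero_iff, P.complex.shape 0 _ (by simp)]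
    simp [eq_comm]
  | succ m => exact P.extMk_eq_zero_iff f _ rfl hf _ (by simp)

variable (R : Type u₂) [Ring R] [Linear R C]

/-- The class in `Ext X Y n` of an `n`-cocycle of the complex `Hom(P, Y)`, for a projective
resolution `P` of `X`. -/
def extMkAddHom (Y : C) (n : ℕ) :
    LinearMap.ker ((P.complex.linearYonedaObj R Y).sc' ((ComplexShape.up ℕ).prev n) n (n + 1)).g.hom
      →+ Abelian.Ext X Y n where
  toFun c := P.extMk c.1 (n + 1) rfl c.2
  map_zero' := P.extMk_zero (n + 1) rfl
  map_add' c c' := (P.add_extMk c.1 c'.1 (n + 1) rfl c.2 c'.2).symm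

theorem extMkAddHom_surjective (n : ℕ) : Function.Surjective (extMkAddHom P R Y n) := fun α ↦ by
  obtain ⟨f, hf, rfl⟩ := P.extMk_surjective α (n + 1) rfl
  exact ⟨⟨f, hf⟩, rfl⟩

/-- The comparison of the two constructions of `Ext` in Mathlib: `Ext R C n` as a left derived
functor, and `Abelian.Ext` through the derived category. -/
def extAddEquivAbelianExt [EnoughProjectives C] (X Y : C) (n : ℕ) :
    ((Ext R C n).obj (.op X)).obj Y ≃+ Abelian.Ext X Y n :=
  let P := projectiveResolution X
  let K := P.complex.linearYonedaObj R Y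
  let S := K.sc' ((ComplexShape.up ℕ).prev n) n (n + 1)
  let homologyIso := P.isoExt n Y ≪≫ K.homologyIsoSc' _ n (n + 1) rfl (by simp) ≪≫
    S.moduleCatHomologyIso
  homologyIso.toLinearEquiv.toAddEquiv.trans <|
    addEquivOfSurjective (LinearMap.range S.moduleCatToCycles).mkQ.toAddMonoidHom
      (extMkAddHom P R Y n) (Submodule.mkQ_surjective _) (extMkAddHom_surjective P R n)
      (.refl _) fun c ↦ by
        change Submodule.Quotient.mk c = 0 ↔ P.extMk c.1 (n + 1) rfl c.2 = 0
        exact (Submodule.Quotient.mk_eq_zero _).trans <|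
          (exists_congr fun g ↦ Subtype.ext_iff).trans
            (extMk_eq_zero_iff_exists_prev P c.1 c.2).symm

end ProjectiveResolution


section DimensionShifting

variable {C : Type u} [Category.{v} C] [Abelian C] [HasExt.{w} C] {S : ShortComplex C}
  (hS : S.ShortExact)

theorem precomp_extClass_surjective [Projective S.X₂] (Y : C) {n m : ℕ} (h : 1 + n = m) :
    Function.Surjective (hS.extClass.precomp Y h) := by
  obtain rfl : m = n + 1 := by lia
  intro x
  exact Abelian.Ext.contravariant_sequence_exact₃ hS Y x (Abelian.Ext.eq_zero_of_projective _) h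

theorem precomp_extClass_mk₀_eq_zero_iff {Y : C} (f : S.X₁ ⟶ Y) :
    hS.extClass.precomp Y (add_zero 1) (.mk₀ f) = 0 ↔ ∃ g, S.f ≫ g = f := by
  constructor
  · intro h
    obtain ⟨y, hy⟩ := Abelian.Ext.contravariant_sequence_exact₁ hS Y _ (add_zero 1) h
    obtain ⟨g, rfl⟩ := (Abelian.Ext.mk₀_bijective _ _).2 y
    exact ⟨g, (Abelian.Ext.mk₀_bijective _ _).1 (by rw [← hy, Abelian.Ext.mk₀_comp_mk₀])⟩
  · rintro ⟨g, rfl⟩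
    simp [← Abelian.Ext.mk₀_comp_mk₀]

theorem precomp_extClass_bijective [Projective S.X₂] (Y : C) (n : ℕ) :
    Function.Bijective (hS.extClass.precomp Y (add_comm 1 (n + 1))) := by
  refine ⟨(injective_iff_map_eq_zero _).2 fun x hx ↦ ?_, precomp_extClass_surjective hS Y _⟩
  obtain ⟨y, rfl⟩ := Abelian.Ext.contravariant_sequence_exact₁ hS Y x (add_comm 1 (n + 1)) hx
  simp [Abelian.Ext.eq_zero_of_projective y]

theorem postcomp_extClass_surjective [Injective S.X₂] (X : C) {n m : ℕ} (h : n + 1 = m) :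
    Function.Surjective (hS.extClass.postcomp X h) := by
  subst h
  intro x
  exact Abelian.Ext.covariant_sequence_exact₁ X hS x (Abelian.Ext.eq_zero_of_injective _) rfl

theorem postcomp_extClass_mk₀_eq_zero_iff {X : C} (f : X ⟶ S.X₃) :
    hS.extClass.postcomp X (zero_add 1) (.mk₀ f) = 0 ↔ ∃ g, g ≫ S.g = f := by
  constructor
  · intro h
    obtain ⟨y, hy⟩ := Abelian.Ext.covariant_sequence_exact₃ X hS _ (zero_add 1) h
    obtain ⟨g, rfl⟩ := (Abelian.Ext.mk₀_bijective _ _).2 y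
    exact ⟨g, (Abelian.Ext.mk₀_bijective _ _).1 (by rw [← hy, Abelian.Ext.mk₀_comp_mk₀])⟩
  · rintro ⟨g, rfl⟩
    simp [← Abelian.Ext.mk₀_comp_mk₀]

theorem postcomp_extClass_bijective [Injective S.X₂] (X : C) (n : ℕ) :
    Function.Bijective (hS.extClass.postcomp X (rfl : n + 1 + 1 = n + 2)) := by
  refine ⟨(injective_iff_map_eq_zero _).2 fun x hx ↦ ?_, postcomp_extClass_surjective hS X _⟩
  obtain ⟨y, rfl⟩ := Abelian.Ext.covariant_sequence_exact₃ X hS x rfl hx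
  simp [Abelian.Ext.eq_zero_of_injective y]

end DimensionShifting

section Adjunction

open Opposite

variable {C : Type u} [Category.{v} C] [Abelian C] {E : Type u₂} [Category.{v₂} E] [Abelian E]
  {L : E ⥤ Cᵒᵖ} {F : Cᵒᵖ ⥤ E} (adj : L ⊣ F)

/-- The isomorphism `Hom(A, L X) ≃+ Hom(X, F A)` of two contravariant functors `L` and `F` that
are adjoint on the right. -/
def homUnopAddEquiv [L.Additive] (A : C) (X : E) :
    (A ⟶ (L.obj X).unop) ≃+ (X ⟶ F.obj (op A)) :=
  { Quiver.Hom.opEquiv with map_add' := op_add C : (A ⟶ (L.obj X).unop) ≃+ (L.obj X ⟶ op A) }.trans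
    (adj.homAddEquiv X (op A))

theorem homUnopAddEquiv_comp [L.Additive] {A B : C} {X : E} (f : A ⟶ B)
    (g : B ⟶ (L.obj X).unop) :
    homUnopAddEquiv adj A X (f ≫ g) = homUnopAddEquiv adj B X g ≫ F.map f.op :=
  adj.homEquiv_naturality_right g.op f.op

include adj in
theorem shortExact_map_op_of_adjunction [F.PreservesEpimorphisms] [F.Additive]
    {S : ShortComplex C} (hS : S.ShortExact) : (S.op.map F).ShortExact := by
  have := adj.rightAdjoint_preservesLimits
  have := F.preservesHomology_of_preservesEpis_and_kernels
  have := F.preservesFiniteColimits_of_preservesHomology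
  exact hS.op.map_of_exact F

/-- The start `0 ⟶ K ⟶ P ⟶ A ⟶ 0` of a projective resolution of `A`. -/
abbrev syzygyShortComplex [EnoughProjectives C] (A : C) : ShortComplex C :=
  .mk (Limits.kernel.ι (Projective.π A)) (Projective.π A) (by simp)

theorem syzygyShortComplex_shortExact [EnoughProjectives C] (A : C) :
    (syzygyShortComplex A).ShortExact where
  exact := ShortComplex.exact_of_f_is_kernel _ (Limits.kernelIsKernel _)

variable [HasExt.{w} C] [HasExt.{w₂} E]

/-- The isomorphism `homUnopAddEquiv` in terms of `Ext` groups of degree `0`. -/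
def extZeroAddEquivOfAdjunction [L.Additive] (X : E) (A : C) :
    Abelian.Ext A (L.obj X).unop 0 ≃+ Abelian.Ext X (F.obj (op A)) 0 :=
  Abelian.Ext.addEquiv₀.trans <| (homUnopAddEquiv adj A X).trans Abelian.Ext.addEquiv₀.symm

theorem extZeroAddEquivOfAdjunction_mk₀ [L.Additive] {X : E} {A : C} (f : A ⟶ (L.obj X).unop) :
    extZeroAddEquivOfAdjunction adj X A (.mk₀ f) = .mk₀ (homUnopAddEquiv adj A X f) :=
  congrArg (fun g ↦ Abelian.Ext.mk₀ (homUnopAddEquiv adj A X g))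
    (Abelian.Ext.addEquiv₀.apply_symm_apply f)

section ShortExact

variable [F.PreservesZeroMorphisms] {S : ShortComplex C} (hS : S.ShortExact)
  (hFS : (S.op.map F).ShortExact) (X : E)

theorem precomp_extClass_eq_zero_iff_of_adjunction [L.Additive] {X : E}
    (x : Abelian.Ext S.X₁ (L.obj X).unop 0) :
    hS.extClass.precomp _ (add_zero 1) x = 0 ↔
      hFS.extClass.postcomp X (zero_add 1) (extZeroAddEquivOfAdjunction adj X S.X₁ x) = 0 := by
  obtain ⟨f, rfl⟩ := (Abelian.Ext.mk₀_bijective _ _).2 x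
  rw [extZeroAddEquivOfAdjunction_mk₀]
  refine (precomp_extClass_mk₀_eq_zero_iff hS f).trans <|
    ((homUnopAddEquiv adj S.X₂ X).toEquiv.exists_congr fun g ↦ ?_).trans
      (postcomp_extClass_mk₀_eq_zero_iff hFS _).symm
  rw [← (homUnopAddEquiv adj S.X₁ X).apply_eq_iff_eq, homUnopAddEquiv_comp]
  rfl

variable [Projective S.X₂] [Injective (S.op.map F).X₂]

/-- Dimension shifting in degree `1`. -/
def extOneAddEquivOfShortExact [L.Additive] :
    Abelian.Ext S.X₃ (L.obj X).unop 1 ≃+ Abelian.Ext X (F.obj (op S.X₃)) 1 :=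
  addEquivOfSurjective _ _ (precomp_extClass_surjective hS (L.obj X).unop (add_zero 1))
    (postcomp_extClass_surjective hFS X (zero_add 1)) (extZeroAddEquivOfAdjunction adj X S.X₁)
    (precomp_extClass_eq_zero_iff_of_adjunction adj hS hFS)

/-- Dimension shifting from degree `n + 1` to degree `n + 2`. -/
def extSuccAddEquivOfShortExact (Y : C) (n : ℕ)
    (e : Abelian.Ext S.X₁ Y (n + 1) ≃+ Abelian.Ext X (F.obj (op S.X₁)) (n + 1)) :
    Abelian.Ext S.X₃ Y (n + 2) ≃+ Abelian.Ext X (F.obj (op S.X₃)) (n + 2) :=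
  (AddEquiv.ofBijective _ (precomp_extClass_bijective hS Y n)).symm.trans <|
    e.trans <| AddEquiv.ofBijective _ (postcomp_extClass_bijective hFS X n)

end ShortExact

/-- An adjunction between contravariant functors `L` and `F` extends to the `Ext` groups.
As `L` is exact, `F` takes projective objects to injective ones, which gives dimension shifting. -/
def extAddEquivOfAdjunction [EnoughProjectives C] [L.Additive] [L.PreservesMonomorphisms]
    [F.PreservesEpimorphisms] (X : E) (n : ℕ) (A : C) :
    Abelian.Ext A (L.obj X).unop n ≃+ Abelian.Ext X (F.obj (op A)) n :=
  have := adj.right_adjoint_additive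
  have hS := syzygyShortComplex_shortExact A
  have hFS := shortExact_map_op_of_adjunction adj hS
  have : Injective ((syzygyShortComplex A).op.map F).X₂ :=
    Injective.injective_of_adjoint adj (op (Projective.over A))
  match n with
  | 0 => extZeroAddEquivOfAdjunction adj X A
  | 1 => extOneAddEquivOfShortExact adj hS hFS X
  | n + 2 => extSuccAddEquivOfShortExact hS hFS X _ n (extAddEquivOfAdjunction X (n + 1) _)

end Adjunction

theorem baer_of_forall_exists_smul_eq {R M : Type*} [Ring R] [IsPrincipalIdealRing R]
    [AddCommGroup M] [Module R M] (h : ∀ a : R, a ≠ 0 → ∀ x : M, ∃ y, a • y = x) :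
    Module.Baer R M := by
  intro I g
  obtain ⟨a, rfl⟩ := (IsPrincipalIdealRing.principal I).principal
  let generator : Ideal.span {a} := ⟨a, Submodule.mem_span_singleton_self a⟩
  obtain ⟨y, hy⟩ : ∃ y, a • y = g generator := by
    by_cases ha : a = 0
    · refine ⟨0, ?_⟩
      rw [show generator = 0 from Subtype.ext ha, map_zero, smul_zero]
    · exact h a ha _
  refine ⟨LinearMap.toSpanSingleton R M y, fun x hx ↦ ?_⟩
  obtain ⟨c, rfl⟩ := Submodule.mem_span_singleton.1 hx
  calc (c • a) • y = c • g generator := by rw [smul_assoc, hy]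
    _ = g (c • generator) := (map_smul g c generator).symm

/-- A `q`-primary abelian group, for `q` a prime: every element has order a power of `q`. -/
def IsPrimaryGroup (q : ℕ) (V : Type*) [AddCommGroup V] : Prop :=
  ∀ v : V, ∃ k : ℕ, q ^ k • v = 0

namespace IsPrimaryGroup

variable {q : ℕ} {V W : Type*} [AddCommGroup V] [AddCommGroup W]

theorem of_surjective (hV : IsPrimaryGroup q V) (f : V →+ W) (hf : Function.Surjective f) :
    IsPrimaryGroup q W := fun w ↦ by
  obtain ⟨v, rfl⟩ := hf w
  obtain ⟨k, hk⟩ := hV v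
  exact ⟨k, by rw [← map_nsmul, hk, map_zero]⟩

theorem pi {ι : Type*} [Finite ι] (hV : IsPrimaryGroup q V) : IsPrimaryGroup q (ι → V) := fun v ↦ by
  have := Fintype.ofFinite ι
  choose k hk using fun i ↦ hV (v i)
  refine ⟨∑ i, k i, funext fun i ↦ ?_⟩
  obtain ⟨m, hm⟩ := pow_dvd_pow q (Finset.single_le_sum_of_canonicallyOrdered (Finset.mem_univ i))
  rw [Pi.smul_apply, hm, mul_comm, mul_smul, hk, smul_zero, Pi.zero_apply]

theorem exists_pow_smul_ne_zero (hV : IsPrimaryGroup q V) {v : V} (hv : v ≠ 0) :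
    ∃ m : ℕ, q ^ m • v ≠ 0 ∧ q • q ^ m • v = 0 := by
  classical
  obtain ⟨m, hm⟩ : ∃ m, Nat.find (hV v) = m + 1 :=
    Nat.exists_eq_succ_of_ne_zero fun h ↦ hv (by simpa [h] using Nat.find_spec (hV v))
  refine ⟨m, Nat.find_min (hV v) (by lia), ?_⟩
  rw [← mul_smul, ← pow_succ', ← hm]
  exact Nat.find_spec (hV v)

end IsPrimaryGroup

namespace ZpQuasicyclic

theorem mk_eq_zero_iff (q : ℚ_[p]) :
    (Submodule.Quotient.mk q : ZpQuasicyclic p) = 0 ↔ ∃ z : ℤ_[p], (z : ℚ_[p]) = q := by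
  rw [Submodule.Quotient.mk_eq_zero, Submodule.mem_span_singleton]
  exact exists_congr fun z ↦ by rw [Algebra.smul_def, mul_one]; rfl

variable {p} in
theorem exists_smul_eq {a : ℤ_[p]} (ha : a ≠ 0) (x : ZpQuasicyclic p) : ∃ y, a • y = x := by
  obtain ⟨q, rfl⟩ := Submodule.Quotient.mk_surjective _ x
  have ha_coe : (a : ℚ_[p]) ≠ 0 := by simpa using ha
  exact ⟨Submodule.Quotient.mk ((a : ℚ_[p])⁻¹ * q),
    congrArg Submodule.Quotient.mk (mul_inv_cancel_left₀ ha_coe q)⟩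

theorem baer_padicInt : Module.Baer ℤ_[p] (ZpQuasicyclic p) :=
  baer_of_forall_exists_smul_eq fun _ ha ↦ exists_smul_eq ha

theorem baer_int : Module.Baer ℤ (ZpQuasicyclic p) :=
  baer_of_forall_exists_smul_eq fun n hn x ↦ by
    obtain ⟨y, hy⟩ := exists_smul_eq (Int.cast_ne_zero.2 hn : (n : ℤ_[p]) ≠ 0) x
    exact ⟨y, by rw [← Int.cast_smul_eq_zsmul ℤ_[p], hy]⟩

theorem isPrimaryGroup : IsPrimaryGroup p (ZpQuasicyclic p) := fun x ↦ by
  obtain ⟨q, rfl⟩ := Submodule.Quotient.mk_surjective _ x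
  obtain ⟨k, hk⟩ : ∃ k : ℕ, ‖(p : ℚ_[p]) ^ k * q‖ ≤ 1 := by
    have htendsto : Filter.Tendsto (fun k : ℕ ↦ (p : ℚ_[p]) ^ k * q) .atTop (nhds (0 * q)) :=
      (tendsto_pow_atTop_nhds_zero_of_norm_lt_one Padic.norm_p_lt_one).mul_const q
    rw [zero_mul] at htendsto
    simpa using (htendsto.eventually (Metric.closedBall_mem_nhds 0 one_pos)).exists
  refine ⟨k, ?_⟩
  rw [← Submodule.Quotient.mk_smul, mk_eq_zero_iff]
  exact ⟨⟨_, hk⟩, by simp⟩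

/-- The class of `1 / p ^ k`, which generates the `p ^ k`-torsion. -/
def invPow (k : ℕ) : ZpQuasicyclic p := Submodule.Quotient.mk ((p : ℚ_[p]) ^ k)⁻¹

theorem smul_invPow (z : ℤ_[p]) (k : ℕ) :
    z • invPow p k = Submodule.Quotient.mk (z * ((p : ℚ_[p]) ^ k)⁻¹) := rfl

theorem smul_invPow_eq_zero_iff (z : ℤ_[p]) (k : ℕ) :
    z • invPow p k = 0 ↔ (p : ℤ_[p]) ^ k ∣ z := by
  have hp : (p : ℚ_[p]) ^ k ≠ 0 := pow_ne_zero k (NeZero.ne _)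
  rw [smul_invPow, mk_eq_zero_iff]
  refine exists_congr fun c ↦ ?_
  rw [eq_mul_inv_iff_mul_eq₀ hp, mul_comm, eq_comm]
  norm_cast
  exact Subtype.coe_inj

theorem pow_smul_invPow (k : ℕ) : p ^ k • invPow p k = 0 := by
  rw [← Nat.cast_smul_eq_nsmul ℤ_[p], smul_invPow_eq_zero_iff, Nat.cast_pow]

theorem invPow_one_ne_zero : invPow p 1 ≠ 0 := fun h ↦ by
  have hdvd := (smul_invPow_eq_zero_iff p 1 1).1 (by rw [h, smul_zero])
  exact PadicInt.prime_p.not_isUnit (isUnit_of_dvd_one (by simpa using hdvd))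

variable {p}

theorem exists_eq_nsmul_invPow {x : ZpQuasicyclic p} {k : ℕ} (hx : p ^ k • x = 0) :
    ∃ n : ℕ, x = n • invPow p k := by
  obtain ⟨z, rfl⟩ : ∃ z : ℤ_[p], z • invPow p k = x := by
    obtain ⟨q, rfl⟩ := Submodule.Quotient.mk_surjective _ x
    rw [← Submodule.Quotient.mk_smul, mk_eq_zero_iff] at hx
    obtain ⟨z, hz⟩ := hx
    refine ⟨z, ?_⟩
    rw [smul_invPow, hz, nsmul_eq_mul, Nat.cast_pow, mul_comm,
      inv_mul_cancel_left₀ (pow_ne_zero k (NeZero.ne _))]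
  refine ⟨z.appr k, ?_⟩
  rw [← Nat.cast_smul_eq_nsmul ℤ_[p], ← sub_eq_zero, ← sub_smul, smul_invPow_eq_zero_iff]
  exact Ideal.mem_span_singleton.1 (z.appr_spec k)

theorem smul_eq_zero_of_pow_dvd {x : ZpQuasicyclic p} {k : ℕ} (hx : p ^ k • x = 0) {z : ℤ_[p]}
    (hz : (p : ℤ_[p]) ^ k ∣ z) : z • x = 0 := by
  obtain ⟨c, rfl⟩ := hz
  rw [mul_comm, mul_smul, ← Nat.cast_pow, Nat.cast_smul_eq_nsmul, hx, smul_zero]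

theorem isLocallyConstant_smul (x : ZpQuasicyclic p) :
    IsLocallyConstant fun z : ℤ_[p] ↦ z • x := by
  obtain ⟨k, hk⟩ := isPrimaryGroup p x
  rw [IsLocallyConstant.iff_eventually_eq]
  intro z
  have hradius : (0 : ℝ) < (p : ℝ) ^ (-(k : ℤ)) :=
    zpow_pos (Nat.cast_pos.2 (Fact.out : p.Prime).pos) _
  filter_upwards [Metric.closedBall_mem_nhds z hradius] with y hy
  rw [mem_closedBall_iff_norm, PadicInt.norm_le_pow_iff_mem_span_pow,
    Ideal.mem_span_singleton] at hy
  rw [← sub_eq_zero, ← sub_smul, smul_eq_zero_of_pow_dvd hk hy]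

/-- The `p`-adic integers through which `f` acts on the `p ^ k`-torsion. -/
def scalarsOn (f : ZpQuasicyclic p →+ ZpQuasicyclic p) (k : ℕ) : Set ℤ_[p] :=
  {z | ∀ x : ZpQuasicyclic p, p ^ k • x = 0 → z • x = f x}

theorem scalarsOn_nonempty (f : ZpQuasicyclic p →+ ZpQuasicyclic p) (k : ℕ) :
    (scalarsOn f k).Nonempty := by
  obtain ⟨n, hn⟩ := exists_eq_nsmul_invPow (x := f (invPow p k)) (k := k)
    (by rw [← map_nsmul, pow_smul_invPow, map_zero])
  refine ⟨n, fun x hx ↦ ?_⟩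
  obtain ⟨m, rfl⟩ := exists_eq_nsmul_invPow hx
  rw [Nat.cast_smul_eq_nsmul, map_nsmul, hn, smul_comm]

theorem isClosed_scalarsOn (f : ZpQuasicyclic p →+ ZpQuasicyclic p) (k : ℕ) :
    IsClosed (scalarsOn f k) := by
  simp only [scalarsOn, Set.ofPred_forall]
  exact isClosed_iInter fun x ↦ isClosed_iInter fun _ ↦
    (isLocallyConstant_smul x).isClosed_fiber (f x)

-- The sets `scalarsOn f k` are nonempty, compact and decreasing, hence have a common element.
theorem exists_forall_eq_smul (f : ZpQuasicyclic p →+ ZpQuasicyclic p) :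
    ∃ z : ℤ_[p], ∀ x, f x = z • x := by
  obtain ⟨z, hz⟩ := IsCompact.nonempty_iInter_of_sequence_nonempty_isCompact_isClosed
    (scalarsOn f)
    (fun k z hz x hx ↦ hz x (by rw [pow_succ', mul_smul, hx, smul_zero]))
    (scalarsOn_nonempty f) (isClosed_scalarsOn f 0).isCompact (isClosed_scalarsOn f)
  refine ⟨z, fun x ↦ ?_⟩
  obtain ⟨k, hk⟩ := isPrimaryGroup p x
  exact (Set.mem_iInter.1 hz k x hk).symm

end ZpQuasicyclic

namespace PontryaginDual'

open ZpQuasicyclic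

variable {p} {V : Type} [AddCommGroup V]

theorem exists_apply_ne_zero_of_smul_eq_zero {v : V} (hv : v ≠ 0) (hpv : p • v = 0) :
    ∃ φ : PontryaginDual' p V, φ v ≠ 0 := by
  let ι : ZMod p →+ V := ZMod.lift p ⟨zmultiplesHom V v, by simpa using hpv⟩
  have hι : Function.Injective ι := by
    refine (ZMod.lift_injective _).2 fun m hm ↦ ?_
    have hdvd := addOrderOf_dvd_iff_zsmul_eq_zero.2 hm
    rwa [addOrderOf_eq_prime hpv hv, ← ZMod.intCast_zmod_eq_zero_iff_dvd] at hdvd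
  let κ : ZMod p →+ ZpQuasicyclic p := ZMod.lift p
    ⟨zmultiplesHom _ (invPow p 1), by simpa using pow_smul_invPow p 1⟩
  obtain ⟨φ, hφ⟩ := (baer_int p).extension_property_addMonoidHom ι hι κ
  have hφv : φ v = invPow p 1 := by
    simpa only [ι, κ, AddMonoidHom.comp_apply, ZMod.lift_coe, zmultiplesHom_apply, one_zsmul]
      using DFunLike.congr_fun hφ ((1 : ℤ) : ZMod p)
  exact ⟨φ.toIntLinearMap, hφv.trans_ne (invPow_one_ne_zero p)⟩

theorem exists_apply_ne_zero (hV : IsPrimaryGroup p V) {v : V} (hv : v ≠ 0) :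
    ∃ φ : PontryaginDual' p V, φ v ≠ 0 := by
  obtain ⟨m, hm, hpm⟩ := hV.exists_pow_smul_ne_zero hv
  obtain ⟨φ, hφ⟩ := exists_apply_ne_zero_of_smul_eq_zero hm hpm
  exact ⟨φ, fun h ↦ hφ (by rw [map_nsmul, h, smul_zero])⟩

theorem mem_of_forall_apply_eq_zero (hV : IsPrimaryGroup p V) (N : Submodule ℤ V) {v : V}
    (h : ∀ φ : PontryaginDual' p V, N ≤ LinearMap.ker φ → φ v = 0) : v ∈ N := by
  have hquot : IsPrimaryGroup p (V ⧸ N) :=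
    hV.of_surjective N.mkQ.toAddMonoidHom N.mkQ_surjective
  rw [← Submodule.Quotient.mk_eq_zero]
  by_contra hv
  obtain ⟨φ, hφ⟩ := exists_apply_ne_zero hquot hv
  refine hφ (h (φ ∘ₗ N.mkQ) fun w hw ↦ ?_)
  simp [(Submodule.Quotient.mk_eq_zero N).2 hw]

-- A homomorphism on a `p`-primary group is injective once it kills no element of order `p`.
theorem exists_injective_pi (hV : IsPrimaryGroup p V) (hfin : {v : V | p • v = 0}.Finite) :
    ∃ (ι : Type) (_ : Finite ι) (χ : ι → PontryaginDual' p V),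
      Function.Injective (LinearMap.pi χ) := by
  have : Finite {v : V // p • v = 0 ∧ v ≠ 0} := hfin.subset fun _ hv ↦ hv.1
  choose χ hχ using fun v : {v : V // p • v = 0 ∧ v ≠ 0} ↦
    exists_apply_ne_zero_of_smul_eq_zero v.2.2 v.2.1
  refine ⟨_, this, χ, (injective_iff_map_eq_zero _).2 fun v hv ↦ ?_⟩
  by_contra hne
  obtain ⟨m, hm, hpm⟩ := hV.exists_pow_smul_ne_zero hne
  refine hχ ⟨p ^ m • v, hpm, hm⟩ ?_
  rw [map_nsmul, show χ _ v = 0 from congrFun hv _, smul_zero]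

theorem exists_forall_eq_sum_smul {ι : Type} [Fintype ι]
    (ψ : PontryaginDual' p (ι → ZpQuasicyclic p)) :
    ∃ c : ι → ℤ_[p], ∀ y, ψ y = ∑ i, c i • y i := by
  classical
  choose c hc using fun i ↦
    exists_forall_eq_smul (ψ ∘ₗ LinearMap.single ℤ (fun _ ↦ ZpQuasicyclic p) i).toAddMonoidHom
  refine ⟨c, fun y ↦ ?_⟩
  conv_lhs => rw [← Finset.univ_sum_single y, map_sum]
  exact Finset.sum_congr rfl fun i _ ↦ hc i (y i)

theorem apply_comp_pi {ι : Type} [Finite ι]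
    (θ : PontryaginDual' p V →ₗ[ℤ_[p]] ZpQuasicyclic p) (χ : ι → PontryaginDual' p V)
    (ψ : PontryaginDual' p (ι → ZpQuasicyclic p)) :
    θ (ψ ∘ₗ LinearMap.pi χ) = ψ fun i ↦ θ (χ i) := by
  have := Fintype.ofFinite ι
  obtain ⟨c, hc⟩ := exists_forall_eq_sum_smul ψ
  have hcomp : ψ ∘ₗ LinearMap.pi χ = ∑ i, c i • χ i :=
    LinearMap.ext fun v ↦ by simp [hc]
  simp [hcomp, hc]

theorem exists_forall_eq_apply (hV : IsPrimaryGroup p V) (hfin : {v : V | p • v = 0}.Finite)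
    (θ : PontryaginDual' p V →ₗ[ℤ_[p]] ZpQuasicyclic p) : ∃ v : V, ∀ φ, θ φ = φ v := by
  obtain ⟨ι, _, χ, hχ⟩ := exists_injective_pi hV hfin
  obtain ⟨v, hv⟩ : (fun i ↦ θ (χ i)) ∈ LinearMap.range (LinearMap.pi χ) := by
    refine mem_of_forall_apply_eq_zero (isPrimaryGroup p).pi _ fun ψ hψ ↦ ?_
    rw [← apply_comp_pi, LinearMap.range_le_ker_iff.1 hψ, map_zero]
  refine ⟨v, fun φ ↦ ?_⟩
  obtain ⟨ψ, rfl⟩ := (baer_int p).extension_property (LinearMap.pi χ) hχ φ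
  rw [apply_comp_pi, ← hv, LinearMap.comp_apply]

end PontryaginDual'

section Dual

/-- A homomorphism of `ℤG`-modules from an equivariant additive map. The `ℤ`-module structure of an
object of `Rep ℤ G` is part of the data, so it need not be the canonical one by definition. -/
def repHomOfAddMonoidHom {A B : Rep ℤ G} (f : A →+ B) (hf : ∀ g x, f (A.ρ g x) = B.ρ g (f x)) :
    A ⟶ B :=
  letI := A.hV2
  letI := B.hV2
  Rep.ofHom ⟨{ f with map_smul' := fun n x ↦ map_intCast_smul f ℤ ℤ n x },
    fun g ↦ LinearMap.ext (hf g)⟩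

/-- The functor `A ↦ A* = Hom_ℤ(A, ℤ(p^∞))`. -/
def pontryaginDualFunctor : (Rep ℤ G)ᵒᵖ ⥤ Rep ℤ_[p] G where
  obj A := pontryaginDualRep p A.unop
  map f := Rep.ofHom
    ⟨LinearMap.lcomp ℤ_[p] _ (AddMonoidHomClass.toAddMonoidHom f.unop.hom).toIntLinearMap,
      fun g ↦ LinearMap.ext fun φ ↦ LinearMap.ext fun x ↦
        congrArg φ (Rep.hom_comm_apply f.unop g⁻¹ x).symm⟩
  map_id _ := rfl
  map_comp _ _ := rfl

/-- The dual `Hom_{ℤ_p}(X, ℤ(p^∞))` of a `ℤ_p G`-module, with the contragredient action. -/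
def padicDual (X : Rep ℤ_[p] G) : Representation ℤ G (X →ₗ[ℤ_[p]] ZpQuasicyclic p) where
  toFun g := LinearMap.lcomp ℤ _ (X.ρ g⁻¹)
  map_one' := by ext; simp
  map_mul' g h := by ext; simp

/-- The dual `padicDual` as an object of `Rep ℤ G`. -/
def padicDualRep (X : Rep ℤ_[p] G) : Rep ℤ G := Rep.of (padicDual p X)

/-- The functor `X ↦ Hom_{ℤ_p}(X, ℤ(p^∞))`, valued in the opposite category so that it can be a
left adjoint. -/
def padicDualFunctor : Rep ℤ_[p] G ⥤ (Rep ℤ G)ᵒᵖ where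
  obj X := .op (padicDualRep p X)
  map f := .op (Rep.ofHom ⟨LinearMap.lcomp ℤ _ f.hom.toLinearMap, fun g ↦
    LinearMap.ext fun φ ↦ LinearMap.ext fun x ↦ congrArg φ (Rep.hom_comm_apply f g⁻¹ x).symm⟩)
  map_id _ := rfl
  map_comp _ _ := rfl

instance : (padicDualFunctor p (G := G)).Additive where
  map_add {_ Y f g} := Quiver.Hom.unop_inj <| Rep.hom_ext <| DFunLike.ext _ _ fun φ ↦
    LinearMap.ext fun x ↦ map_add (show Y →ₗ[ℤ_[p]] ZpQuasicyclic p from φ) (f.hom x) (g.hom x)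

instance : (padicDualFunctor p (G := G)).PreservesMonomorphisms where
  preserves f _ := by
    have hf : Function.Injective f.hom := (Rep.mono_iff_injective f).1 inferInstance
    refine @op_mono_of_epi _ _ _ _ _ ((Rep.epi_iff_surjective _).2 fun φ ↦ ?_)
    exact (ZpQuasicyclic.baer_padicInt p).extension_property f.hom.toLinearMap hf φ

instance : (pontryaginDualFunctor p (G := G)).PreservesEpimorphisms where
  preserves f _ := by
    have hf : Function.Injective f.unop.hom := (Rep.mono_iff_injective f.unop).1 inferInstance
    refine (Rep.epi_iff_surjective _).2 fun φ ↦ ?_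
    exact (ZpQuasicyclic.baer_int p).extension_property
      (AddMonoidHomClass.toAddMonoidHom f.unop.hom).toIntLinearMap hf φ

section Flip

variable {p} {X : Rep ℤ_[p] G} {A : Rep ℤ G}

/-- The transpose `a ↦ (x ↦ f x a)` of a homomorphism `f` from `X` to the dual of `A`. -/
def pontryaginDualFlip (f : X ⟶ pontryaginDualRep p A) : A ⟶ padicDualRep p X :=
  let f' : X →ₗ[ℤ_[p]] PontryaginDual' p A := f.hom.toLinearMap
  repHomOfAddMonoidHom
    (.mk' (fun a ↦ (LinearMap.applyₗ' ℤ_[p] a ∘ₗ f' : X →ₗ[ℤ_[p]] ZpQuasicyclic p))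
      fun a b ↦ LinearMap.ext fun x ↦ map_add (f' x) a b)
    fun g a ↦ LinearMap.ext fun x ↦ by
      have hf : f' (X.ρ g⁻¹ x) = f' x ∘ₗ A.ρ g⁻¹⁻¹ := Rep.hom_comm_apply f g⁻¹ x
      rw [inv_inv] at hf
      exact (LinearMap.congr_fun hf a).symm

/-- The transpose `x ↦ (a ↦ h a x)` of a homomorphism `h` from `A` to the dual of `X`. -/
def padicDualFlip (h : A ⟶ padicDualRep p X) : X ⟶ pontryaginDualRep p A :=
  let h' : A →+ (X →ₗ[ℤ_[p]] ZpQuasicyclic p) := AddMonoidHomClass.toAddMonoidHom h.hom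
  Rep.ofHom ⟨
    { toFun x := ((LinearMap.applyₗ' ℤ_[p] x).toAddMonoidHom.comp h').toIntLinearMap
      map_add' x y := LinearMap.ext fun a ↦ map_add (h' a) x y
      map_smul' z x := LinearMap.ext fun a ↦ map_smul (h' a) z x },
    fun g ↦ LinearMap.ext fun x ↦ LinearMap.ext fun a ↦ by
      have hh : h' (A.ρ g⁻¹ a) = h' a ∘ₗ X.ρ g⁻¹⁻¹ := Rep.hom_comm_apply h g⁻¹ a
      rw [inv_inv] at hh
      exact (LinearMap.congr_fun hh x).symm⟩

end Flip

/-- The two dualities are adjoint on the right, by transposition. -/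
def padicDualAdjunction : padicDualFunctor p (G := G) ⊣ pontryaginDualFunctor p :=
  Adjunction.mkOfHomEquiv
    { homEquiv _ _ :=
        { toFun h := padicDualFlip h.unop
          invFun f := .op (pontryaginDualFlip f)
          left_inv _ := rfl
          right_inv _ := rfl }
      homEquiv_naturality_left_symm _ _ := rfl
      homEquiv_naturality_right _ _ := rfl }

variable {p} in
theorem bijective_pontryaginDualFlip_id {B : Rep ℤ G} (hB : IsPrimaryGroup p B)
    (hfin : {b : B | p • b = 0}.Finite) :
    Function.Bijective (pontryaginDualFlip (𝟙 (pontryaginDualRep p B))).hom := by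
  refine ⟨(injective_iff_map_eq_zero _).2 fun b hb ↦ ?_, fun θ ↦ ?_⟩
  · by_contra hne
    obtain ⟨φ, hφ⟩ := PontryaginDual'.exists_apply_ne_zero hB hne
    exact hφ (LinearMap.congr_fun hb φ)
  · obtain ⟨b, hb⟩ := PontryaginDual'.exists_forall_eq_apply hB hfin θ
    exact ⟨b, LinearMap.ext fun φ ↦ (hb φ).symm⟩

variable {p} in
/-- Biduality: evaluation is an isomorphism from `B` to the dual of `B*`. -/
def isoPadicDualPontryaginDual {B : Rep ℤ G} (hB : IsPrimaryGroup p B)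
    (hfin : {b : B | p • b = 0}.Finite) : B ≅ padicDualRep p (pontryaginDualRep p B) :=
  have hbij := bijective_pontryaginDualFlip_id hB hfin
  have := (Rep.mono_iff_injective _).2 hbij.1
  have := (Rep.epi_iff_surjective _).2 hbij.2
  have := isIso_of_mono_of_epi (pontryaginDualFlip (𝟙 (pontryaginDualRep p B)))
  asIso (pontryaginDualFlip (𝟙 _))

end Dual

theorem ext_pontryagin_duality_general (A B : Rep ℤ G) (hB : IsPrimaryGroup p (B : Type))
    (hfin : {b : (B : Type) | p • b = 0}.Finite) (n : ℕ) :
    Nonempty ((((Ext ℤ (Rep ℤ G) n).obj (Opposite.op A)).obj B) ≃+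
      (((Ext ℤ_[p] (Rep ℤ_[p] G) n).obj
        (Opposite.op (pontryaginDualRep p B))).obj (pontryaginDualRep p A))) := by
  have : HasExt.{0} (Rep.{0} ℤ G) := hasExt_of_enoughProjectives _
  have : HasExt.{0} (Rep.{0} ℤ_[p] G) := hasExt_of_enoughProjectives _
  let biduality := ((Ext ℤ (Rep ℤ G) n).obj (.op A)).mapIso (isoPadicDualPontryaginDual hB hfin)
  exact ⟨biduality.toLinearEquiv.toAddEquiv.trans <| (extAddEquivAbelianExt ℤ A _ n).trans <|
    (extAddEquivOfAdjunction (padicDualAdjunction p) (pontryaginDualRep p B) n A).trans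
      (extAddEquivAbelianExt ℤ_[p] _ _ n).symm⟩

/-- **Lemma 2.9.**  Let `p` be a prime and `G` a group.  Let `A` and `B` be
`ℤG`-modules whose underlying additive groups are abelian `p`-groups of finite
rank, with `B` divisible.  Then for all `n ≥ 0` there is an isomorphism of
abelian groups `Ext^n_{ℤG}(A, B) ≅ Ext^n_{ℤ_pG}(B*, A*)`. -/
theorem ext_pontryagin_duality (A B : Rep ℤ G)
    (hAp : ∀ a : (A : Type), ∃ k : ℕ, (p ^ k : ℕ) • a = 0)
    (hBp : ∀ b : (B : Type), ∃ k : ℕ, (p ^ k : ℕ) • b = 0)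
    (hAfr : FiniteRankAbelian (A : Type)) (hBfr : FiniteRankAbelian (B : Type))
    (hBdiv : ∀ (b : (B : Type)) (m : ℕ), 0 < m → ∃ b' : (B : Type), m • b' = b)
    (n : ℕ) :
    Nonempty ((((Ext ℤ (Rep ℤ G) n).obj (Opposite.op A)).obj B) ≃+
      (((Ext ℤ_[p] (Rep ℤ_[p] G) n).obj
        (Opposite.op (pontryaginDualRep p B))).obj (pontryaginDualRep p A))) :=
  ext_pontryagin_duality_general p A B hBp (hBfr.2 p Fact.out) n

end
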